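/- Let α ∈ (0,1) and F_τ^n(λ) as above. Then for every λ > 0 and n ≥ 1, λ^{-1} |E_{α,1}(-λ t_n^α) − F_τ^n(λ)| ≤ c τ t_n^{α-1}, with c independent of λ, n, τ. -/

import Mathlib

/-- The one-parameter Mittag-Leffler function `E_{α,1}(z) = ∑_{k=0}^∞ z^k / Γ(kα+1)`. -/
noncomputable def mittagLeffler (α z : ℝ) : ℝ :=
  ∑' k : ℕ, z ^ k / Real.Gamma (k * α + 1)

/-- The backward Euler convolution quadrature weights `b_j = (-1)^j binom(α, j)`,
with generating function `∑_j b_j ξ^j = (1-ξ)^α`. -/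
noncomputable def cqWeight (α : ℝ) (j : ℕ) : ℝ :=
  (-1) ^ j * (∏ i ∈ Finset.range j, (α - i)) / (Nat.factorial j)

section
open MeasureTheory Set Filter Topology


noncomputable def pk (β t : ℝ) : ℝ := t ^ (β - 1) / Real.Gamma β

lemma pk_pos {β t : ℝ} (hβ : 0 < β) (ht : 0 < t) : 0 < pk β t :=
  div_pos (Real.rpow_pos_of_pos ht _) (Real.Gamma_pos_of_pos hβ)

lemma ofReal_betaInt {β γ x t : ℝ} (hx : 0 ≤ x) (hxt : x ≤ t) :
    ((x ^ (β - 1) * (t - x) ^ (γ - 1) : ℝ) : ℂ) = (x : ℂ) ^ ((β : ℂ) - 1) * ((t : ℂ) - x) ^ ((γ : ℂ) - 1) := by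
  push_cast
  rw [Complex.ofReal_cpow hx, Complex.ofReal_cpow (by linarith)]
  push_cast; rfl

lemma beta_intervalIntegrable {β γ t : ℝ} (hβ : 0 < β) (hγ : 0 < γ) (ht : 0 < t) :
    IntervalIntegrable (fun x => x ^ (β - 1) * (t - x) ^ (γ - 1)) volume 0 t := by
  have key : ∀ {β γ : ℝ}, 0 < β → 0 < γ →
      IntervalIntegrable (fun x => x ^ (β - 1) * (t - x) ^ (γ - 1)) volume 0 (t/2) := by
    intro β γ hβ hγ
    apply IntervalIntegrable.mul_continuousOn
    · exact intervalIntegral.intervalIntegrable_rpow' (by linarith)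
    · apply ContinuousOn.rpow_const (by fun_prop)
      intro x hx
      rw [uIcc_of_le (by linarith)] at hx
      left; have := hx.2; intro h; linarith
  have h1 := key hβ hγ
  have h2 := (key hγ hβ).comp_sub_left t
  refine h1.trans ?_
  have := h2.symm
  simp only [sub_zero, sub_sub_cancel] at this
  rw [show t - t/2 = t/2 by ring] at this
  exact this.congr (fun x _ => by ring)

lemma beta_integral {β γ t : ℝ} (hβ : 0 < β) (hγ : 0 < γ) (ht : 0 < t) :
    ∫ x in (0:ℝ)..t, x ^ (β - 1) * (t - x) ^ (γ - 1) =
      t ^ (β + γ - 1) * (Real.Gamma β * Real.Gamma γ / Real.Gamma (β + γ)) := by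
  have h := Complex.betaIntegral_scaled (β : ℂ) (γ : ℂ) ht
  have h2 := Complex.Gamma_mul_Gamma_eq_betaIntegral (s := (β : ℂ)) (t := (γ : ℂ)) (by simpa) (by simpa)
  have h3 : Real.Gamma (β + γ) ≠ 0 := (Real.Gamma_pos_of_pos (by linarith)).ne'
  apply Complex.ofReal_injective
  rw [← intervalIntegral.integral_ofReal]
  have h4 : ∫ x in (0:ℝ)..t, ((x ^ (β - 1) * (t - x) ^ (γ - 1) : ℝ) : ℂ) =
     ∫ x in (0:ℝ)..t, (x : ℂ) ^ ((β : ℂ) - 1) * ((t : ℂ) - x) ^ ((γ : ℂ) - 1) := by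
    apply intervalIntegral.integral_congr
    intro x hx
    rw [uIcc_of_le ht.le] at hx
    exact ofReal_betaInt hx.1 hx.2
  rw [h4, h]
  push_cast
  rw [Complex.ofReal_cpow ht.le]
  push_cast
  congr 1
  have h5 : (Real.Gamma (β + γ) : ℂ) ≠ 0 := by exact_mod_cast h3
  rw [eq_div_iff h5, ← Complex.Gamma_ofReal, ← Complex.Gamma_ofReal, ← Complex.Gamma_ofReal, h2]
  push_cast; ring

lemma pk_conv {β γ t : ℝ} (hβ : 0 < β) (hγ : 0 < γ) (ht : 0 < t) :
    IntervalIntegrable (fun x => pk β x * pk γ (t - x)) volume 0 t ∧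
    ∫ x in (0:ℝ)..t, pk β x * pk γ (t - x) = pk (β + γ) t := by
  have h0 := (Real.Gamma_pos_of_pos hβ).ne'
  have h1 := (Real.Gamma_pos_of_pos hγ).ne'
  have : (fun x => pk β x * pk γ (t - x)) =
      fun x => (x ^ (β - 1) * (t - x) ^ (γ - 1)) * (1 / (Real.Gamma β * Real.Gamma γ)) := by
    ext x; simp only [pk]; field_simp
  rw [this]
  refine ⟨(beta_intervalIntegrable hβ hγ ht).mul_const _, ?_⟩
  rw [intervalIntegral.integral_mul_const, beta_integral hβ hγ ht, pk]
  field_simp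

/-- lower bound for Gamma -/
lemma Gamma_lower {y R : ℝ} (hy : 1 ≤ y) (hR : 0 < R) :
    R ^ (y - 1) * Real.exp (-R) ≤ Real.Gamma y := by
  rw [Real.Gamma_eq_integral (by linarith)]
  have hi := Real.GammaIntegral_convergent (s := y) (by linarith)
  have : ∫ x in Ioi R, Real.exp (-x) * R ^ (y - 1) = R ^ (y - 1) * Real.exp (-R) := by
    rw [integral_mul_const, integral_exp_neg_Ioi]; ring
  rw [← this]
  calc _ ≤ ∫ x in Ioi R, Real.exp (-x) * x ^ (y - 1) := by
        apply setIntegral_mono_on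
        · exact (integrableOn_exp_neg_Ioi R).mul_const _
        · exact hi.mono_set (Ioi_subset_Ioi hR.le)
        · exact measurableSet_Ioi
        · intro x hx
          have : R ≤ x := le_of_lt hx
          gcongr
    _ ≤ _ := by
        apply setIntegral_mono_set hi
        · filter_upwards [ae_restrict_mem measurableSet_Ioi] with x hx
          have : 0 < x := hx
          positivity
        · exact (Ioi_subset_Ioi hR.le).eventuallyLE

lemma summable_ml {α β : ℝ} (hα : 0 < α) (x : ℝ) :
    Summable (fun k : ℕ => x ^ k / Real.Gamma (k * α + β)) := by
  set X := |x| + 1 with hX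
  have hXpos : 0 < X := by positivity
  set R := (2 * X) ^ (1/α) with hR
  have hRpos : 0 < R := by positivity
  have hRα : R ^ α = 2 * X := by
    rw [hR, ← Real.rpow_mul (by positivity)]; simp [hα.ne']
  apply Summable.of_norm_bounded_eventually_nat (g := fun k : ℕ => (1/2:ℝ)^k * (Real.exp R / R ^ (β - 1)))
  · exact (summable_geometric_of_lt_one (by norm_num) (by norm_num)).mul_right _
  · have : Tendsto (fun k : ℕ => (k:ℝ) * α + β) atTop atTop :=
      tendsto_atTop_add_const_right _ _ (tendsto_natCast_atTop_atTop.atTop_mul_const hα)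
    filter_upwards [this.eventually_ge_atTop 1] with k hk
    have hg := Gamma_lower hk hRpos
    have h1 : R ^ ((k:ℝ) * α + β - 1) = (2*X)^k * R ^ (β - 1) := by
      rw [show (k:ℝ) * α + β - 1 = α * k + (β - 1) by ring, Real.rpow_add hRpos, Real.rpow_mul hRpos.le, hRα,
        Real.rpow_natCast]
    have hG : 0 < Real.Gamma (k * α + β) := Real.Gamma_pos_of_pos (by linarith)
    rw [norm_div, norm_pow, Real.norm_eq_abs, Real.norm_eq_abs, abs_of_pos hG]
    have h2 : |x| ^ k ≤ X ^ k := by gcongr; linarith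
    rw [h1] at hg
    have hp : 0 < R ^ (β - 1) := by positivity
    calc |x| ^ k / Real.Gamma (k * α + β) ≤ X ^ k / ((2*X)^k * R ^ (β - 1) * Real.exp (-R)) := by
          gcongr
      _ = _ := by
          rw [Real.exp_neg, mul_pow]; field_simp; rw [← mul_pow]; norm_num

lemma summable_ml' {α β : ℝ} (hα : 0 < α) (x : ℝ) :
    Summable (fun k : ℕ => (k + 1) * x ^ k / Real.Gamma (k * α + β)) := by
  apply Summable.of_norm_bounded (g := fun k : ℕ => ‖(2 * |x|)^k / Real.Gamma (k * α + β)‖) (summable_ml hα (2 * |x|)).norm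
  intro k
  rw [norm_div, norm_div]
  have : ‖((k:ℝ) + 1) * x ^ k‖ ≤ ‖(2 * |x|)^k‖ := by
    rw [norm_mul, norm_pow, norm_pow, norm_mul, mul_pow]
    simp only [Real.norm_eq_abs, abs_abs, abs_two]
    have : |(k:ℝ) + 1| ≤ 2 ^ k := by
      rw [abs_of_pos (by positivity)]
      exact_mod_cast (Nat.lt_two_pow_self (n := k))
    gcongr
  gcongr


def Geo (a : ℕ → ℝ) : Prop := ∃ A M : ℝ, 0 ≤ A ∧ 0 ≤ M ∧ ∀ k, |a k| ≤ A * M ^ k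

noncomputable def SS (α : ℝ) (a : ℕ → ℝ) (β t : ℝ) : ℝ := ∑' k : ℕ, a k * pk (k * α + β) t

noncomputable def GG (α : ℝ) (a : ℕ → ℝ) (β x : ℝ) : ℝ :=
  ∑' k : ℕ, a k * (x ^ k / Real.Gamma (k * α + β))

lemma pk_fac {α β t : ℝ} (ht : 0 < t) (k : ℕ) :
    pk (k * α + β) t = t ^ (β - 1) * ((t ^ α) ^ k / Real.Gamma (k * α + β)) := by
  rw [pk, show (k:ℝ) * α + β - 1 = (β - 1) + α * k by ring, Real.rpow_add ht, Real.rpow_mul ht.le,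
    Real.rpow_natCast, mul_div_assoc]

lemma SS_eq {α β t : ℝ} (a : ℕ → ℝ) (ht : 0 < t) : SS α a β t = t ^ (β - 1) * GG α a β (t ^ α) := by
  rw [SS, GG, ← tsum_mul_left]
  congr 1; ext k; rw [pk_fac ht]; ring

lemma summable_GG {α β : ℝ} (hα : 0 < α) (hβ : 0 < β) {a : ℕ → ℝ} (ha : Geo a) (x : ℝ) :
    Summable (fun k : ℕ => |a k| * (|x| ^ k / Real.Gamma (k * α + β))) := by
  obtain ⟨A, M, hA, hM, h⟩ := ha
  have hs := (summable_ml (β := β) hα (M * |x|)).mul_left A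
  have hG : ∀ k : ℕ, 0 < Real.Gamma (k * α + β) := fun k => Real.Gamma_pos_of_pos (by positivity)
  apply Summable.of_nonneg_of_le _ _ hs
  · intro k; have := hG k; positivity
  · intro k
    have := hG k
    calc _ ≤ A * M ^ k * (|x| ^ k / Real.Gamma (k * α + β)) := by gcongr; exact h k
      _ = _ := by rw [mul_pow]; ring

lemma continuous_GG {α β : ℝ} (hα : 0 < α) (hβ : 0 < β) {a : ℕ → ℝ} (ha : Geo a) :
    Continuous (GG α a β) := by
  rw [continuous_iff_continuousAt]
  intro x0
  have hG : ∀ k : ℕ, 0 < Real.Gamma (k * α + β) := fun k => Real.Gamma_pos_of_pos (by positivity)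
  have : ContinuousOn (GG α a β) (Metric.ball 0 (|x0| + 1)) := by
    apply continuousOn_tsum (u := fun k : ℕ => |a k| * (|(|x0| + 1)| ^ k / Real.Gamma (k * α + β)))
    · intro k; fun_prop
    · exact summable_GG hα hβ ha _
    · intro k x hx
      have hx' : |x| ≤ |(|x0| + 1)| := by
        rw [abs_of_pos (by positivity : 0 < |x0| + 1)]
        rw [Metric.mem_ball, dist_zero_right, Real.norm_eq_abs] at hx; exact hx.le
      rw [norm_mul, norm_div, norm_pow, Real.norm_eq_abs, Real.norm_eq_abs, Real.norm_eq_abs, abs_of_pos (hG k)]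
      have := hG k
      gcongr
  exact this.continuousAt (Metric.isOpen_ball.mem_nhds (by simp))

lemma continuousOn_SS {α β : ℝ} (hα : 0 < α) (hβ : 0 < β) {a : ℕ → ℝ} (ha : Geo a) :
    ContinuousOn (SS α a β) (Ioi 0) := by
  have : ContinuousOn (fun t : ℝ => t ^ (β - 1) * GG α a β (t ^ α)) (Ioi 0) := by
    apply ContinuousOn.mul
    · apply ContinuousOn.rpow_const continuousOn_id
      intro x hx; left; exact (ne_of_gt hx)
    · apply (continuous_GG hα hβ ha).comp_continuousOn
      apply ContinuousOn.rpow_const continuousOn_id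
      intro x hx; left; exact (ne_of_gt hx)
  exact this.congr (fun t ht => SS_eq a ht)

lemma bound_SS {α β : ℝ} (hα : 0 < α) (hβ : 0 < β) {a : ℕ → ℝ} (ha : Geo a) (T : ℝ) :
    ∃ C, 0 ≤ C ∧ ∀ t, 0 < t → t ≤ T → |SS α a β t| ≤ C * t ^ (β - 1) := by
  obtain ⟨C, hC⟩ := (isCompact_Icc (a := (0:ℝ)) (b := T ^ α)).exists_bound_of_continuousOn
    (continuous_GG hα hβ ha).continuousOn
  refine ⟨|C|, abs_nonneg _, fun t ht htT => ?_⟩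
  rw [SS_eq a ht, abs_mul, abs_of_pos (Real.rpow_pos_of_pos ht _), mul_comm]
  refine mul_le_mul_of_nonneg_right ?_ (Real.rpow_pos_of_pos ht _).le
  exact (hC _ ⟨by positivity, Real.rpow_le_rpow ht.le htT hα.le⟩).trans (le_abs_self C)

lemma summable_SS {α β : ℝ} (hα : 0 < α) (hβ : 0 < β) {a : ℕ → ℝ} (ha : Geo a) {t : ℝ} (ht : 0 < t) :
    Summable (fun k : ℕ => |a k| * pk (k * α + β) t) := by
  have := (summable_GG hα hβ ha (t ^ α)).mul_left (t ^ (β - 1))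
  refine this.congr (fun k => ?_)
  rw [pk_fac ht, abs_of_pos (Real.rpow_pos_of_pos ht _)]; ring

lemma hasSum_SS {α β : ℝ} (hα : 0 < α) (hβ : 0 < β) {a : ℕ → ℝ} (ha : Geo a) {t : ℝ} (ht : 0 < t) :
    HasSum (fun k : ℕ => a k * pk (k * α + β) t) (SS α a β t) := by
  apply Summable.hasSum
  apply Summable.of_norm
  refine (summable_SS hα hβ ha ht).congr (fun k => ?_)
  rw [norm_mul, Real.norm_eq_abs, Real.norm_eq_abs, abs_of_pos (pk_pos (by positivity) ht)]

lemma integrable_conv {α β γ : ℝ} (hα : 0 < α) (hβ : 0 < β) (hγ : 0 < γ) {a b : ℕ → ℝ}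
    (ha : Geo a) (hb : Geo b) {t : ℝ} (ht : 0 < t) :
    IntervalIntegrable (fun x => SS α a β x * SS α b γ (t - x)) volume 0 t := by
  obtain ⟨C, hC, h1⟩ := bound_SS hα hβ ha t
  obtain ⟨D, hD, h2⟩ := bound_SS hα hγ hb t
  have hi := (beta_intervalIntegrable hβ hγ ht).const_mul (C * D)
  rw [intervalIntegrable_iff_integrableOn_Ioo_of_le ht.le] at hi ⊢
  refine Integrable.mono' hi ?_ ?_
  · apply ContinuousOn.aestronglyMeasurable _ measurableSet_Ioo
    apply ContinuousOn.mul
    · exact (continuousOn_SS hα hβ ha).mono (fun x hx => hx.1)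
    · apply (continuousOn_SS hα hγ hb).comp (by fun_prop)
      intro x hx; exact sub_pos.mpr hx.2
  · filter_upwards [ae_restrict_mem measurableSet_Ioo] with x hx
    rw [norm_mul, Real.norm_eq_abs, Real.norm_eq_abs]
    have e1 := h1 x hx.1 hx.2.le
    have e2 := h2 (t - x) (sub_pos.mpr hx.2) (by linarith [hx.1])
    calc _ ≤ (C * x ^ (β - 1)) * (D * (t - x) ^ (γ - 1)) := by
          gcongr; exact mul_nonneg hC (Real.rpow_pos_of_pos hx.1 _).le
      _ = _ := by ring

lemma integrable_SS {α β : ℝ} (hα : 0 < α) (hβ : 0 < β) {a : ℕ → ℝ}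
    (ha : Geo a) {t : ℝ} (ht : 0 < t) :
    IntervalIntegrable (SS α a β) volume 0 t := by
  obtain ⟨C, hC, h1⟩ := bound_SS hα hβ ha t
  have hi := (intervalIntegral.intervalIntegrable_rpow' (a := 0) (b := t) (r := β - 1) (by linarith)).const_mul C
  rw [intervalIntegrable_iff_integrableOn_Ioo_of_le ht.le] at hi ⊢
  refine Integrable.mono' hi ?_ ?_
  · apply ContinuousOn.aestronglyMeasurable _ measurableSet_Ioo
    exact (continuousOn_SS hα hβ ha).mono (fun x hx => hx.1)
  · filter_upwards [ae_restrict_mem measurableSet_Ioo] with x hx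
    exact h1 x hx.1 hx.2.le

lemma conv_SS {α β γ : ℝ} (hα : 0 < α) (hβ : 0 < β) (hγ : 0 < γ) {a b : ℕ → ℝ}
    (ha : Geo a) (hb : Geo b) {t : ℝ} (ht : 0 < t) :
    ∫ x in (0:ℝ)..t, SS α a β x * SS α b γ (t - x) =
      SS α (fun n => ∑ p ∈ Finset.HasAntidiagonal.antidiagonal n, a p.1 * b p.2) (β + γ) t := by
  let F : ℕ × ℕ → ℝ → ℝ := fun p x => (a p.1 * pk (p.1 * α + β) x) * (b p.2 * pk (p.2 * α + γ) (t - x))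
  have hpk : ∀ p : ℕ × ℕ, _ := fun p =>
    pk_conv (β := p.1 * α + β) (γ := p.2 * α + γ) (by positivity) (by positivity) ht
  have hpe : ∀ p : ℕ × ℕ, pk ((p.1 * α + β) + (p.2 * α + γ)) t = pk (((p.1 + p.2 : ℕ) : ℝ) * α + (β + γ)) t := by
    intro p; congr 1; push_cast; ring
  have hFint : ∀ p, Integrable (F p) (volume.restrict (Ioo 0 t)) := by
    intro p
    have := ((hpk p).1.const_mul (a p.1 * b p.2))
    have this := (intervalIntegrable_iff_integrableOn_Ioo_of_le ht.le).mp this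
    refine Integrable.congr this (Eventually.of_forall fun x => ?_)
    simp only [F]; ring
  have hcon : ∀ c : ℝ, ∀ p : ℕ × ℕ, ∫ x in Ioo 0 t, c * (pk (p.1 * α + β) x * pk (p.2 * α + γ) (t - x)) =
      c * pk (((p.1 + p.2 : ℕ) : ℝ) * α + (β + γ)) t := by
    intro c p
    rw [integral_const_mul, ← integral_Ioc_eq_integral_Ioo, ← intervalIntegral.integral_of_le ht.le, (hpk p).2, hpe]
  have hFval : ∀ p, ∫ x in Ioo 0 t, F p x = a p.1 * b p.2 * pk (((p.1 + p.2 : ℕ) : ℝ) * α + (β + γ)) t := by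
    intro p
    rw [← hcon]
    congr 1; ext x; simp only [F]; ring
  have hFn : ∀ p, ∫ x in Ioo 0 t, ‖F p x‖ = |a p.1| * |b p.2| * pk (((p.1 + p.2 : ℕ) : ℝ) * α + (β + γ)) t := by
    intro p
    rw [← hcon]
    apply setIntegral_congr_fun measurableSet_Ioo
    intro x hx
    have e1 := pk_pos (β := p.1 * α + β) (by positivity) hx.1
    have e2 := pk_pos (β := p.2 * α + γ) (by positivity) (sub_pos.mpr hx.2)
    simp only [F, norm_mul, Real.norm_eq_abs, abs_of_pos e1, abs_of_pos e2]; ring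
  have hsum : Summable (fun p : ℕ × ℕ => |a p.1| * |b p.2| * pk (((p.1 + p.2 : ℕ) : ℝ) * α + (β + γ)) t) := by
    obtain ⟨A, M, hA, hM, h⟩ := ha
    obtain ⟨B, N, hB, hN, h'⟩ := hb
    set K := max M N
    have hK : 0 ≤ K := le_max_of_le_left hM
    have key : Summable (fun p : ℕ × ℕ => A * B * K ^ (p.1 + p.2) * pk (((p.1 + p.2 : ℕ) : ℝ) * α + (β + γ)) t) := by
      rw [← Finset.HasAntidiagonal.sigmaAntidiagonalEquivProd.summable_iff]
      rw [summable_sigma_of_nonneg]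
      · refine ⟨fun n => (hasSum_fintype _).summable, ?_⟩
        have hs := ((summable_ml' (β := β + γ) hα (K * t ^ α)).mul_left (A * B * t ^ (β + γ - 1)))
        refine hs.congr (fun n => ?_)
        rw [tsum_fintype]
        have : ∀ p : Finset.HasAntidiagonal.antidiagonal n, (fun p : ℕ × ℕ => A * B * K ^ (p.1 + p.2) * pk (((p.1 + p.2 : ℕ) : ℝ) * α + (β + γ)) t)
            (p : ℕ × ℕ) = A * B * K ^ n * pk ((n : ℝ) * α + (β + γ)) t := by
          intro p
          have := Finset.HasAntidiagonal.mem_antidiagonal.mp p.2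
          simp only [this]
        simp only [Function.comp, Finset.HasAntidiagonal.sigmaAntidiagonalEquivProd_apply]
        rw [Finset.sum_congr rfl (fun p _ => this p)]
        simp only [Finset.univ_eq_attach, Finset.sum_const, Finset.card_attach, Finset.Nat.card_antidiagonal, nsmul_eq_mul]
        rw [pk_fac ht, mul_pow]; push_cast; ring
      · rintro ⟨n, p⟩
        have := (pk_pos (β := ((p.1.1 + p.1.2 : ℕ) : ℝ) * α + (β + γ)) (by positivity) ht).le
        simp only [Function.comp, Finset.HasAntidiagonal.sigmaAntidiagonalEquivProd_apply]
        positivity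
    refine Summable.of_nonneg_of_le ?_ ?_ key
    · intro p
      have := (pk_pos (β := ((p.1 + p.2 : ℕ) : ℝ) * α + (β + γ)) (by positivity) ht).le
      positivity
    · intro p
      have := (pk_pos (β := ((p.1 + p.2 : ℕ) : ℝ) * α + (β + γ)) (by positivity) ht).le
      refine mul_le_mul_of_nonneg_right ?_ this
      calc |a p.1| * |b p.2| ≤ (A * K ^ p.1) * (B * K ^ p.2) := by
            gcongr
            · refine (h _).trans ?_; gcongr; exact le_max_left _ _
            · refine (h' _).trans ?_; gcongr; exact le_max_right _ _
        _ = _ := by rw [pow_add]; ring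
  have main := hasSum_integral_of_summable_integral_norm hFint (hsum.congr (fun p => (hFn p).symm))
  simp only [hFval] at main
  have hL : ∫ x in Ioo 0 t, ∑' p, F p x = ∫ x in (0:ℝ)..t, SS α a β x * SS α b γ (t - x) := by
    rw [intervalIntegral.integral_of_le ht.le, integral_Ioc_eq_integral_Ioo]
    apply setIntegral_congr_fun measurableSet_Ioo
    intro x hx
    have s1 := summable_SS hα hβ ha hx.1
    have s2 := summable_SS hα hγ hb (sub_pos.mpr hx.2)
    have t1 : Summable (fun k : ℕ => ‖a k * pk (k * α + β) x‖) := by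
      refine s1.congr (fun k => ?_)
      rw [norm_mul, Real.norm_eq_abs, Real.norm_eq_abs, abs_of_pos (pk_pos (by positivity) hx.1)]
    have t2 : Summable (fun k : ℕ => ‖b k * pk (k * α + γ) (t - x)‖) := by
      refine s2.congr (fun k => ?_)
      rw [norm_mul, Real.norm_eq_abs, Real.norm_eq_abs, abs_of_pos (pk_pos (by positivity) (sub_pos.mpr hx.2))]
    exact (tsum_mul_tsum_of_summable_norm t1 t2).symm
  rw [hL] at main
  rw [← Finset.HasAntidiagonal.sigmaAntidiagonalEquivProd.hasSum_iff] at main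
  have m2 := main.sigma (fun n => hasSum_fintype _)
  rw [SS, ← m2.tsum_eq]
  congr 1; ext n
  rw [Finset.sum_mul, ← Finset.sum_attach (Finset.HasAntidiagonal.antidiagonal n)]
  apply Finset.sum_congr rfl
  intro p _
  have := Finset.HasAntidiagonal.mem_antidiagonal.mp p.2
  simp only [Function.comp, Finset.HasAntidiagonal.sigmaAntidiagonalEquivProd_apply, this]


lemma SS_shift {α β : ℝ} (hα : 0 < α) (hβ : 0 < β) {a : ℕ → ℝ} (ha : Geo a) {t : ℝ} (ht : 0 < t) :
    SS α a β t = a 0 * pk β t + SS α (fun k => a (k + 1)) (α + β) t := by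
  have h := hasSum_SS hα hβ ha ht
  rw [SS, h.summable.tsum_eq_zero_add, SS]
  congr 1
  · simp
  · congr 1; ext k; congr 2; push_cast; ring

lemma SS_lin {α β : ℝ} (hα : 0 < α) (hβ : 0 < β) {a b : ℕ → ℝ} (ha : Geo a) (hb : Geo b) (c d : ℝ)
    {t : ℝ} (ht : 0 < t) :
    SS α (fun k => c * a k + d * b k) β t = c * SS α a β t + d * SS α b β t := by
  have h1 := (hasSum_SS hα hβ ha ht).mul_left c
  have h2 := (hasSum_SS hα hβ hb ht).mul_left d
  rw [SS, ← (h1.add h2).tsum_eq]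
  congr 1; ext k; ring

def dl (k : ℕ) : ℝ := if k = 0 then 1 else 0

lemma geo_dl : Geo dl := by
  refine ⟨1, 1, by norm_num, by norm_num, fun k => ?_⟩
  simp only [dl]; split_ifs <;> simp

lemma SS_dl (α β t : ℝ) : SS α dl β t = pk β t := by
  rw [SS, tsum_eq_single 0]
  · simp [dl]
  · intro k hk; simp [dl, hk]

lemma anti_dl_right (a : ℕ → ℝ) :
    (fun n => ∑ p ∈ Finset.HasAntidiagonal.antidiagonal n, a p.1 * dl p.2) = a := by
  ext n
  rw [Finset.sum_eq_single (n, 0)]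
  · simp [dl]
  · rintro ⟨i, j⟩ h hne
    have := Finset.HasAntidiagonal.mem_antidiagonal.mp h
    simp only at this
    have : j ≠ 0 := by rintro rfl; apply hne; simp at this; simp [this]
    simp [dl, this]
  · intro h; exact absurd (Finset.HasAntidiagonal.mem_antidiagonal.mpr (by simp)) h

def ar (μ : ℝ) (k : ℕ) : ℝ := (-μ) ^ k
def aq (μ : ℝ) (k : ℕ) : ℝ := (k + 1) * (-μ) ^ k

lemma geo_ar (μ : ℝ) : Geo (ar μ) :=
  ⟨1, |μ|, by norm_num, abs_nonneg _, fun k => by simp [ar, abs_pow]⟩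

lemma geo_aq (μ : ℝ) : Geo (aq μ) := by
  refine ⟨1, 2 * |μ|, by norm_num, by positivity, fun k => ?_⟩
  rw [aq, abs_mul, abs_pow, abs_neg, one_mul, mul_pow]
  have : |(k:ℝ) + 1| ≤ 2 ^ k := by
    rw [abs_of_pos (by positivity)]
    exact_mod_cast (Nat.lt_two_pow_self (n := k))
  gcongr

lemma ar_ar (μ : ℝ) :
    (fun n => ∑ p ∈ Finset.HasAntidiagonal.antidiagonal n, ar μ p.1 * ar μ p.2) = aq μ := by
  ext n
  have : ∀ p ∈ Finset.HasAntidiagonal.antidiagonal n, ar μ p.1 * ar μ p.2 = (-μ) ^ n := by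
    intro p hp
    rw [ar, ar, ← pow_add, Finset.HasAntidiagonal.mem_antidiagonal.mp hp]
  rw [Finset.sum_congr rfl this]
  simp [aq]

noncomputable def rr (α μ : ℝ) : ℝ → ℝ := SS α (ar μ) α
noncomputable def uu (α μ : ℝ) : ℝ → ℝ := SS α (ar μ) 1
noncomputable def ww (α μ : ℝ) : ℝ → ℝ := SS α (aq μ) α

lemma ar_shift {α β μ : ℝ} (hα : 0 < α) (hβ : 0 < β) {t : ℝ} (ht : 0 < t) :
    SS α (ar μ) β t = pk β t - μ * SS α (ar μ) (α + β) t := by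
  rw [SS_shift hα hβ (geo_ar μ) ht]
  have : (fun k => ar μ (k + 1)) = fun k => (-μ) * ar μ k + 0 * ar μ k := by
    ext k; simp only [ar, pow_succ]; ring
  rw [this, SS_lin hα (by linarith) (geo_ar μ) (geo_ar μ) _ _ ht]
  simp [ar]; ring

lemma pk_one (t : ℝ) : pk 1 t = 1 := by simp [pk]

lemma rr_volterra {α μ : ℝ} (hα : 0 < α) {t : ℝ} (ht : 0 < t) :
    IntervalIntegrable (fun x => rr α μ x * pk α (t - x)) volume 0 t ∧
    rr α μ t + μ * ∫ x in (0:ℝ)..t, rr α μ x * pk α (t - x) = pk α t := by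
  have h1 := conv_SS hα hα hα (geo_ar μ) geo_dl ht
  have h2 := integrable_conv hα hα hα (geo_ar μ) geo_dl ht
  simp only [SS_dl] at h1 h2
  rw [anti_dl_right] at h1
  refine ⟨h2, ?_⟩
  simp only [rr]
  rw [h1, ar_shift hα hα ht]; ring

lemma uu_volterra {α μ : ℝ} (hα : 0 < α) {t : ℝ} (ht : 0 < t) :
    uu α μ t + μ * ∫ x in (0:ℝ)..t, uu α μ x * pk α (t - x) = 1 := by
  have h1 := conv_SS hα one_pos hα (geo_ar μ) geo_dl ht
  simp only [SS_dl] at h1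
  rw [anti_dl_right] at h1
  simp only [uu]
  rw [h1, ar_shift hα one_pos ht, pk_one, add_comm 1 α]; ring

lemma integral_SS {α β : ℝ} (hα : 0 < α) (hβ : 0 < β) {a : ℕ → ℝ} (ha : Geo a) {t : ℝ} (ht : 0 < t) :
    ∫ x in (0:ℝ)..t, SS α a β x = SS α a (β + 1) t := by
  have h1 := conv_SS hα hβ one_pos ha geo_dl ht
  simp only [SS_dl, pk_one, mul_one] at h1
  rw [anti_dl_right] at h1
  exact h1

lemma uu_eq {α μ : ℝ} (hα : 0 < α) {t : ℝ} (ht : 0 < t) :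
    uu α μ t = 1 - μ * ∫ x in (0:ℝ)..t, rr α μ x := by
  simp only [rr]
  rw [integral_SS hα hα (geo_ar μ) ht, uu, ar_shift hα one_pos ht, pk_one]

lemma integral_ww {α μ : ℝ} (hα : 0 < α) {t : ℝ} (ht : 0 < t) :
    α * ∫ x in (0:ℝ)..t, ww α μ x = t * rr α μ t := by
  simp only [ww]
  rw [integral_SS hα hα (geo_aq μ) ht, rr, SS, SS, ← tsum_mul_left, ← tsum_mul_left]
  congr 1; ext k
  have hk : (k:ℝ) * α + α ≠ 0 := by positivity
  simp only [pk, aq, ar]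
  rw [← add_assoc, Real.Gamma_add_one hk, show (k:ℝ) * α + α + 1 - 1 = (k * α + α - 1) + 1 by ring,
    Real.rpow_add_one ht.ne']
  have := (Real.Gamma_pos_of_pos (by positivity : 0 < (k:ℝ) * α + α)).ne'
  field_simp

lemma ww_eq {α μ : ℝ} (hα : 0 < α) {t : ℝ} (ht : 0 < t) :
    ww α μ t = rr α μ t - μ * ∫ x in (0:ℝ)..t, rr α μ x * rr α μ (t - x) := by
  have h1 := conv_SS hα hα hα (geo_ar μ) (geo_ar μ) ht
  rw [ar_ar] at h1
  simp only [rr, ww]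
  rw [h1, ar_shift hα hα ht, SS_shift hα hα (geo_aq μ) ht]
  have : (fun k => aq μ (k + 1)) = fun k => (-μ) * ar μ k + (-μ) * aq μ k := by
    ext k; simp only [ar, aq, pow_succ]; push_cast; ring
  rw [this, SS_lin hα (by linarith) (geo_ar μ) (geo_aq μ) _ _ ht]
  simp [aq]; ring

lemma rr_cont {α μ : ℝ} (hα : 0 < α) : ContinuousOn (rr α μ) (Ioi 0) := continuousOn_SS hα hα (geo_ar μ)
lemma ww_cont {α μ : ℝ} (hα : 0 < α) : ContinuousOn (ww α μ) (Ioi 0) := continuousOn_SS hα hα (geo_aq μ)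

lemma rr_pos_near {α μ : ℝ} (hα : 0 < α) : ∃ ε > 0, ∀ t, 0 < t → t < ε → 0 < rr α μ t := by
  have h0 : GG α (ar μ) α 0 = 1 / Real.Gamma α := by
    rw [GG, tsum_eq_single 0]
    · simp [ar]
    · intro k hk; simp [hk]
  have hc : Continuous (fun t : ℝ => GG α (ar μ) α (t ^ α)) :=
    (continuous_GG hα hα (geo_ar μ)).comp (Real.continuous_rpow_const hα.le)
  have hp : 0 < GG α (ar μ) α ((0:ℝ) ^ α) := by
    rw [Real.zero_rpow hα.ne', h0]
    have := Real.Gamma_pos_of_pos hα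
    positivity
  have := hc.continuousAt.eventually (lt_mem_nhds hp)
  obtain ⟨ε, hε, h⟩ := Metric.eventually_nhds_iff.mp this
  refine ⟨ε, hε, fun t ht hte => ?_⟩
  rw [rr, SS_eq _ ht]
  exact mul_pos (Real.rpow_pos_of_pos ht _) (h (by simpa [abs_of_pos ht] using hte))

lemma pk_ratio {α : ℝ} (hα : 0 < α) (hα1 : α < 1) {s t T : ℝ} (hs : 0 < s) (hst : s < t) (htT : t ≤ T) :
    pk α t / pk α T * pk α (T - s) ≤ pk α (t - s) := by
  have hg := Real.Gamma_pos_of_pos hα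
  have ht : 0 < t := hs.trans hst
  have hT : 0 < T := ht.trans_le htT
  rw [div_mul_eq_mul_div, div_le_iff₀ (pk_pos hα hT)]
  simp only [pk]
  rw [div_mul_div_comm, div_mul_div_comm, ← Real.mul_rpow ht.le (by linarith), ← Real.mul_rpow (by linarith) hT.le]
  refine div_le_div_of_nonneg_right ?_ (by positivity)
  apply Real.rpow_le_rpow_of_nonpos
  · exact mul_pos (by linarith) hT
  · nlinarith
  · linarith

lemma pk_anti {α : ℝ} (hα : 0 < α) (hα1 : α < 1) {s t : ℝ} (hs : 0 < s) (hst : s ≤ t) : pk α t ≤ pk α s := by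
  have hg := Real.Gamma_pos_of_pos hα
  simp only [pk]
  refine div_le_div_of_nonneg_right ?_ hg.le
  exact Real.rpow_le_rpow_of_nonpos hs hst (by linarith)

lemma pk_half {α : ℝ} (hα : 0 < α) {t : ℝ} (ht : 0 < t) : pk α (t / 2) ≤ 2 * pk α t := by
  have hg := Real.Gamma_pos_of_pos hα
  simp only [pk]
  rw [Real.div_rpow ht.le (by norm_num), ← mul_div_assoc]
  refine div_le_div_of_nonneg_right ?_ hg.le
  rw [div_eq_mul_inv, ← Real.rpow_neg (by norm_num), mul_comm]
  have : (2:ℝ) ^ (-(α - 1)) ≤ 2 ^ (1:ℝ) := Real.rpow_le_rpow_of_exponent_le (by norm_num) (by linarith)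
  rw [Real.rpow_one] at this
  gcongr

lemma pk_int {α : ℝ} (hα : 0 < α) (t T : ℝ) :
    IntervalIntegrable (fun x => pk α (T - x)) volume t T ∧
    ∫ x in t..T, pk α (T - x) = (T - t) ^ α / (α * Real.Gamma α) := by
  have hi : IntervalIntegrable (pk α) volume 0 (T - t) := by
    exact (intervalIntegral.intervalIntegrable_rpow' (by linarith)).div_const _
  constructor
  · have := (hi.comp_sub_left T).symm
    simpa using this
  · rw [intervalIntegral.integral_comp_sub_left (fun x => pk α x), sub_self]
    simp only [pk]
    rw [intervalIntegral.integral_div, integral_rpow (by left; linarith)]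
    simp [hα.ne']
    field_simp

lemma rr_pos {α μ : ℝ} (hα : 0 < α) (hα1 : α < 1) (hμ : 0 < μ) {t : ℝ} (ht : 0 < t) : 0 < rr α μ t := by
  by_contra hneg
  push Not at hneg
  obtain ⟨ε, hε, hnear⟩ := rr_pos_near (μ := μ) hα
  have hεt : ε ≤ t := by
    by_contra h; exact absurd (hnear t ht (not_le.mp h)) (not_lt.mpr hneg)
  have hcI : ContinuousOn (rr α μ) (Icc (ε/2) t) :=
    (rr_cont hα).mono (fun x hx => lt_of_lt_of_le (by positivity) hx.1)
  have hcl : IsClosed (Icc (ε/2) t ∩ rr α μ ⁻¹' Iic 0) :=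
    hcI.preimage_isClosed_of_isClosed isClosed_Icc isClosed_Iic
  have hcomp : IsCompact (Icc (ε/2) t ∩ rr α μ ⁻¹' Iic 0) :=
    isCompact_Icc.of_isClosed_subset hcl inter_subset_left
  obtain ⟨T, ⟨hT1, hT2⟩, hTl⟩ := hcomp.exists_isLeast ⟨t, ⟨by linarith, le_refl _⟩, hneg⟩
  have hT0 : 0 < T := lt_of_lt_of_le (by positivity) hT1.1
  have hTr : rr α μ T ≤ 0 := hT2
  have hpos : ∀ s, 0 < s → s < T → 0 < rr α μ s := by
    intro s hs hsT
    by_contra h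
    push Not at h
    have hse : ε ≤ s := by
      by_contra h'; exact absurd (hnear s hs (not_le.mp h')) (not_lt.mpr h)
    have := hTl ⟨⟨by linarith, hsT.le.trans hT1.2⟩, h⟩
    linarith
  have hg := Real.Gamma_pos_of_pos hα
  obtain ⟨t1, ht1a, ht1b, ht1c⟩ : ∃ t1, T / 2 ≤ t1 ∧ t1 < T ∧
      2 * μ * ((T - t1) ^ α / (α * Real.Gamma α)) < 1 := by
    have hc : Continuous (fun s : ℝ => 2 * μ * ((T - s) ^ α / (α * Real.Gamma α))) := by
      have := Real.continuous_rpow_const (q := α) hα.le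
      have : Continuous (fun s : ℝ => (T - s) ^ α) := this.comp (by fun_prop)
      fun_prop
    have h0 : (fun s : ℝ => 2 * μ * ((T - s) ^ α / (α * Real.Gamma α))) T < 1 := by
      simp [Real.zero_rpow hα.ne']
    obtain ⟨δ, hδ, h⟩ := Metric.eventually_nhds_iff.mp (hc.continuousAt.eventually (gt_mem_nhds h0))
    refine ⟨max (T/2) (T - δ/2), le_max_left _ _, by apply max_lt <;> linarith, h ?_⟩
    rw [Real.dist_eq, abs_lt]
    have h1 := le_max_right (T/2) (T - δ/2)
    have h2 : max (T/2) (T - δ/2) < T := by apply max_lt <;> linarith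
    constructor <;> linarith
  have ht10 : 0 < t1 := by linarith
  obtain ⟨s, hs, hsmax⟩ := (isCompact_Icc (a := t1) (b := T)).exists_isMaxOn ⟨t1, le_refl _, ht1b.le⟩
    ((rr_cont (μ := μ) hα).mono (fun x hx => lt_of_lt_of_le ht10 hx.1))
  have hR : 0 < rr α μ s := lt_of_lt_of_le (hpos t1 ht10 ht1b) (hsmax ⟨le_refl _, ht1b.le⟩)
  have hsT : s < T := by
    rcases hs.2.lt_or_eq with h | h
    · exact h
    · rw [h] at hR; linarith
  have hs0 : 0 < s := lt_of_lt_of_le ht10 hs.1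
  obtain ⟨i1, v1⟩ := rr_volterra (μ := μ) hα hs0
  obtain ⟨i2, v2⟩ := rr_volterra (μ := μ) hα hT0
  have i2a := i2.mono_set (c := 0) (d := s) (by
    rw [uIcc_of_le hs0.le, uIcc_of_le hT0.le]; exact Icc_subset_Icc_right hsT.le)
  have i2b := i2.mono_set (c := s) (d := T) (by
    rw [uIcc_of_le hsT.le, uIcc_of_le hT0.le]; exact Icc_subset_Icc_left hs0.le)
  rw [← intervalIntegral.integral_add_adjacent_intervals i2a i2b] at v2
  set q := pk α s / pk α T with hq
  have hkT := pk_pos hα hT0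
  have hks := pk_pos hα hs0
  have hq0 : 0 < q := div_pos hks hkT
  have hqe : q * pk α T = pk α s := by rw [hq]; field_simp
  have hq2 : q ≤ 2 := by
    rw [hq, div_le_iff₀ hkT]
    exact (pk_anti hα hα1 (by positivity) (by linarith [hs.1])).trans (pk_half hα hT0)
  have c1 : q * ∫ x in (0:ℝ)..s, rr α μ x * pk α (T - x) ≤ ∫ x in (0:ℝ)..s, rr α μ x * pk α (s - x) := by
    rw [← intervalIntegral.integral_const_mul]
    apply intervalIntegral.integral_mono_on_of_le_Ioo hs0.le (i2a.const_mul q) i1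
    intro x hx
    have := pk_ratio hα hα1 hx.1 hx.2 hsT.le
    have h2 := (hpos x hx.1 (hx.2.trans hsT)).le
    calc q * (rr α μ x * pk α (T - x)) = rr α μ x * (q * pk α (T - x)) := by ring
      _ ≤ _ := by gcongr
  have c2 : ∫ x in s..T, rr α μ x * pk α (T - x) ≤ rr α μ s * ((T - s) ^ α / (α * Real.Gamma α)) := by
    obtain ⟨j1, j2⟩ := pk_int hα s T
    rw [← j2, ← intervalIntegral.integral_const_mul]
    apply intervalIntegral.integral_mono_on_of_le_Ioo hsT.le i2b (j1.const_mul _)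
    intro x hx
    have h1 := (pk_pos hα (sub_pos.mpr hx.2)).le
    have h2 : rr α μ x ≤ rr α μ s := hsmax ⟨hs.1.trans hx.1.le, hx.2.le⟩
    gcongr
  have c3 : (T - s) ^ α / (α * Real.Gamma α) ≤ (T - t1) ^ α / (α * Real.Gamma α) := by
    have := hs.1
    have : 0 ≤ T - s := by linarith
    gcongr
  set A := ∫ x in (0:ℝ)..s, rr α μ x * pk α (T - x)
  set B := ∫ x in s..T, rr α μ x * pk α (T - x)
  set C := ∫ x in (0:ℝ)..s, rr α μ x * pk α (s - x)
  set D := (T - s) ^ α / (α * Real.Gamma α)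
  set D1 := (T - t1) ^ α / (α * Real.Gamma α)
  have hD : 0 ≤ D := by
    have : 0 ≤ T - s := by linarith
    positivity
  have e1 : pk α T ≤ μ * (A + B) := by linarith
  have e2 : rr α μ s ≤ q * (μ * B) := by
    have h1 : q * pk α T ≤ q * (μ * (A + B)) := by gcongr
    have h2 : μ * (q * A) ≤ μ * C := by gcongr
    nlinarith
  have e3 : q * (μ * B) ≤ 2 * (μ * (rr α μ s * D)) := by
    calc q * (μ * B) ≤ q * (μ * (rr α μ s * D)) := by gcongr
      _ ≤ _ := by gcongr
  have e4 : 2 * (μ * (rr α μ s * D)) ≤ rr α μ s * (2 * μ * D1) := by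
    calc 2 * (μ * (rr α μ s * D)) = rr α μ s * (2 * μ * D) := by ring
      _ ≤ _ := by gcongr
  have e5 : rr α μ s * (2 * μ * D1) < rr α μ s * 1 := by gcongr
  linarith


lemma rr_le {α μ : ℝ} (hα : 0 < α) (hα1 : α < 1) (hμ : 0 < μ) {t : ℝ} (ht : 0 < t) :
    rr α μ t ≤ pk α t := by
  obtain ⟨i1, v1⟩ := rr_volterra (μ := μ) hα ht
  have : 0 ≤ ∫ x in (0:ℝ)..t, rr α μ x * pk α (t - x) := by
    rw [intervalIntegral.integral_of_le ht.le, integral_Ioc_eq_integral_Ioo]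
    apply setIntegral_nonneg measurableSet_Ioo
    intro x hx
    exact mul_nonneg (rr_pos hα hα1 hμ hx.1).le (pk_pos hα (sub_pos.mpr hx.2)).le
  nlinarith

lemma rr_int {α μ : ℝ} (hα : 0 < α) {t : ℝ} (ht : 0 < t) : IntervalIntegrable (rr α μ) volume 0 t :=
  integrable_SS hα hα (geo_ar μ) ht

lemma rr_mass {α μ : ℝ} (hα : 0 < α) (hα1 : α < 1) (hμ : 0 < μ) {t : ℝ} (ht : 0 < t) :
    0 ≤ ∫ x in (0:ℝ)..t, rr α μ x ∧ μ * ∫ x in (0:ℝ)..t, rr α μ x ≤ 1 := by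
  obtain ⟨i1, v1⟩ := rr_volterra (μ := μ) hα ht
  have h0 := rr_pos hα hα1 hμ ht
  have hk := pk_pos hα ht
  have : pk α t * ∫ x in (0:ℝ)..t, rr α μ x ≤ ∫ x in (0:ℝ)..t, rr α μ x * pk α (t - x) := by
    rw [← intervalIntegral.integral_const_mul]
    apply intervalIntegral.integral_mono_on_of_le_Ioo ht.le ((rr_int hα ht).const_mul _) i1
    intro x hx
    have h1 := (rr_pos hα hα1 hμ hx.1).le
    have h2 := pk_anti hα hα1 (sub_pos.mpr hx.2) (by linarith [hx.1] : t - x ≤ t)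
    rw [mul_comm]
    gcongr
  constructor
  · rw [intervalIntegral.integral_of_le ht.le, integral_Ioc_eq_integral_Ioo]
    exact setIntegral_nonneg measurableSet_Ioo (fun x hx => (rr_pos hα hα1 hμ hx.1).le)
  · by_contra h
    push Not at h
    have : μ * (pk α t * ∫ x in (0:ℝ)..t, rr α μ x) ≤ pk α t := by nlinarith
    nlinarith

lemma uu_bounds {α μ : ℝ} (hα : 0 < α) (hα1 : α < 1) (hμ : 0 < μ) {t : ℝ} (ht : 0 < t) :
    0 ≤ uu α μ t ∧ uu α μ t ≤ 1 ∧ 1 - uu α μ t ≤ μ * (t ^ α / (α * Real.Gamma α)) := by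
  obtain ⟨h1, h2⟩ := rr_mass hα hα1 hμ ht
  have h3 : ∫ x in (0:ℝ)..t, rr α μ x ≤ t ^ α / (α * Real.Gamma α) := by
    have hi : IntervalIntegrable (pk α) volume 0 t :=
      (intervalIntegral.intervalIntegrable_rpow' (by linarith)).div_const _
    have he : ∫ x in (0:ℝ)..t, pk α x = t ^ α / (α * Real.Gamma α) := by
      simp only [pk]
      rw [intervalIntegral.integral_div, integral_rpow (by left; linarith)]
      simp [hα.ne']
      field_simp
    rw [← he]
    apply intervalIntegral.integral_mono_on_of_le_Ioo ht.le (rr_int hα ht) hi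
    intro x hx
    exact rr_le hα hα1 hμ hx.1
  rw [uu_eq hα ht]
  have h4 : μ * ∫ x in (0:ℝ)..t, rr α μ x ≤ μ * (t ^ α / (α * Real.Gamma α)) := by gcongr
  have h5 : 0 ≤ μ * ∫ x in (0:ℝ)..t, rr α μ x := by positivity
  exact ⟨by linarith, by linarith, by linarith⟩

lemma rr_rr {α μ : ℝ} (hα : 0 < α) (hα1 : α < 1) (hμ : 0 < μ) {t : ℝ} (ht : 0 < t) :
    0 ≤ μ * ∫ x in (0:ℝ)..t, rr α μ x * rr α μ (t - x) ∧
    μ * ∫ x in (0:ℝ)..t, rr α μ x * rr α μ (t - x) ≤ 4 * pk α t := by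
  have hi : IntervalIntegrable (fun x => rr α μ x * rr α μ (t - x)) volume 0 t :=
    integrable_conv hα hα hα (geo_ar μ) (geo_ar μ) ht
  have hr := rr_int (μ := μ) hα ht
  have hr2 : IntervalIntegrable (fun x => rr α μ (t - x)) volume 0 t := by
    have := (hr.comp_sub_left t).symm
    simpa using this
  obtain ⟨m1, m2⟩ := rr_mass hα hα1 hμ ht
  have hk := pk_pos hα (half_pos ht)
  constructor
  · refine mul_nonneg hμ.le ?_
    rw [intervalIntegral.integral_of_le ht.le, integral_Ioc_eq_integral_Ioo]
    exact setIntegral_nonneg measurableSet_Ioo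
      (fun x hx => mul_nonneg (rr_pos hα hα1 hμ hx.1).le (rr_pos hα hα1 hμ (sub_pos.mpr hx.2)).le)
  · have h1 : ∫ x in (0:ℝ)..t, rr α μ x * rr α μ (t - x) ≤
        ∫ x in (0:ℝ)..t, pk α (t/2) * (rr α μ x + rr α μ (t - x)) := by
      apply intervalIntegral.integral_mono_on_of_le_Ioo ht.le hi ((hr.add hr2).const_mul _)
      intro x hx
      have a1 := rr_pos hα hα1 hμ hx.1
      have a2 := rr_pos hα hα1 hμ (sub_pos.mpr hx.2)
      have b1 := rr_le hα hα1 hμ hx.1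
      have b2 := rr_le hα hα1 hμ (sub_pos.mpr hx.2)
      rcases le_total (t/2) x with h | h
      · have := b1.trans (pk_anti hα hα1 (half_pos ht) h)
        nlinarith
      · have := b2.trans (pk_anti hα hα1 (half_pos ht) (by linarith : t/2 ≤ t - x))
        nlinarith
    rw [intervalIntegral.integral_const_mul, intervalIntegral.integral_add hr hr2,
      intervalIntegral.integral_comp_sub_left (fun x => rr α μ x), sub_self, sub_zero] at h1
    have h2 := pk_half hα ht
    set I := ∫ x in (0:ℝ)..t, rr α μ x
    calc _ ≤ μ * (pk α (t/2) * (I + I)) := by gcongr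
      _ = 2 * pk α (t/2) * (μ * I) := by ring
      _ ≤ 2 * pk α (t/2) * 1 := by gcongr
      _ ≤ _ := by linarith

lemma hasDerivAt_int {f : ℝ → ℝ} (hc : ContinuousOn f (Ioi 0)) {t : ℝ} (ht : 0 < t)
    (hi : IntervalIntegrable f volume 0 t) : HasDerivAt (fun x => ∫ s in (0:ℝ)..x, f s) (f t) t := by
  apply intervalIntegral.integral_hasDerivAt_right hi
  · exact hc.stronglyMeasurableAtFilter isOpen_Ioi t ht
  · exact hc.continuousAt (isOpen_Ioi.mem_nhds ht)

lemma uu_deriv {α μ : ℝ} (hα : 0 < α) {t : ℝ} (ht : 0 < t) : HasDerivAt (uu α μ) (-μ * rr α μ t) t := by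
  have h := ((hasDerivAt_int (rr_cont (μ := μ) hα) ht (rr_int hα ht)).const_mul μ).const_sub 1
  have h := h.congr_of_eventuallyEq (f₁ := uu α μ)
    (by filter_upwards [isOpen_Ioi.mem_nhds ht] with x hx using uu_eq hα hx)
  have e : -μ * rr α μ t = -(μ * rr α μ t) := by ring
  rw [e]; exact h

lemma rr_deriv {α μ : ℝ} (hα : 0 < α) {t : ℝ} (ht : 0 < t) :
    HasDerivAt (rr α μ) ((α * ww α μ t - rr α μ t) / t) t := by
  have h := ((hasDerivAt_int (ww_cont (μ := μ) hα) ht (integrable_SS hα hα (geo_aq μ) ht)).const_mul α).div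
    (hasDerivAt_id t) ht.ne'
  have h := h.congr_of_eventuallyEq (f₁ := rr α μ)
    (by
      filter_upwards [isOpen_Ioi.mem_nhds ht] with x hx
      have hx : 0 < x := hx
      simp only [Pi.div_apply, id]
      rw [integral_ww hα hx]; field_simp)
  have e : (α * ww α μ t - rr α μ t) / t = (α * ww α μ t * id t - (α * ∫ s in (0:ℝ)..t, ww α μ s) * 1) / id t ^ 2 := by
    simp only [id]
    rw [integral_ww hα ht]; field_simp
  rw [e]; exact h

lemma rr_deriv_bound {α μ : ℝ} (hα : 0 < α) (hα1 : α < 1) (hμ : 0 < μ) {t : ℝ} (ht : 0 < t) :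
    |(α * ww α μ t - rr α μ t) / t| ≤ 6 * pk α t / t := by
  rw [abs_div, abs_of_pos ht]
  refine div_le_div_of_nonneg_right ?_ ht.le
  obtain ⟨h1, h2⟩ := rr_rr hα hα1 hμ ht
  have h3 := rr_pos hα hα1 hμ ht
  have h4 := rr_le hα hα1 hμ ht
  rw [ww_eq hα ht]
  set I := μ * ∫ x in (0:ℝ)..t, rr α μ x * rr α μ (t - x)
  rw [abs_le]
  constructor <;> nlinarith

/-- global second order Taylor bound -/
lemma taylor {α μ : ℝ} (hα : 0 < α) (hα1 : α < 1) (hμ : 0 < μ) {n t : ℝ} (hn : 0 < n) (ht : 0 < t) :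
    |uu α μ t - uu α μ n - (-μ * rr α μ n) * (t - n)| ≤
      (24 / Real.Gamma α + 4 / (α * Real.Gamma α)) * μ * n ^ (α - 2) * (t - n) ^ 2 := by
  have hg := Real.Gamma_pos_of_pos hα
  have hn2 : 0 < n ^ (α - 2) := Real.rpow_pos_of_pos hn _
  have hpk : pk α n = n * n ^ (α - 2) / Real.Gamma α := by
    rw [pk, mul_comm, ← Real.rpow_add_one hn.ne']; congr 2; ring
  have hna : n ^ α = n ^ 2 * n ^ (α - 2) := by
    rw [← Real.rpow_natCast, ← Real.rpow_add hn]; congr 1; push_cast; ring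
  rcases le_total (n/2) t with h | h
  · -- near
    have hpos : ∀ s ∈ uIcc n t, 0 < s ∧ n / 2 ≤ s := by
      intro s hs
      have : n / 2 ≤ s := by
        rcases mem_uIcc.mp hs with h' | h' <;> linarith [h'.1]
      exact ⟨by linarith, this⟩
    set K := 24 / Real.Gamma α * n ^ (α - 2) with hK
    have hK0 : 0 ≤ K := by positivity
    have hr : ∀ s ∈ uIcc n t, |rr α μ s - rr α μ n| ≤ K * |s - n| := by
      intro s hs
      have hc := (convex_uIcc n t).norm_image_sub_le_of_norm_hasDerivWithin_le (f := rr α μ)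
        (f' := fun s => (α * ww α μ s - rr α μ s) / s) (C := K)
        (fun x hx => (rr_deriv hα (hpos x hx).1).hasDerivWithinAt)
        (fun x hx => by
          obtain ⟨hx0, hx2⟩ := hpos x hx
          rw [Real.norm_eq_abs]
          refine (rr_deriv_bound hα hα1 hμ hx0).trans ?_
          have e1 : pk α x ≤ 2 * pk α n := (pk_anti hα hα1 (half_pos hn) hx2).trans (pk_half hα hn)
          have hp := pk_pos hα hn
          calc 6 * pk α x / x ≤ 6 * (2 * pk α n) / (n/2) := by gcongr
            _ = K := by rw [hpk, hK]; field_simp; norm_num)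
        left_mem_uIcc hs
      simpa [Real.norm_eq_abs] using hc
    have hu := (convex_uIcc n t).norm_image_sub_le_of_norm_hasDerivWithin_le
      (f := fun s => uu α μ s - uu α μ n - (-μ * rr α μ n) * (s - n))
      (f' := fun s => -μ * rr α μ s - (-μ * rr α μ n)) (C := μ * (K * |t - n|))
      (x := n) (y := t)
      (fun x hx => by
        have h1 := uu_deriv (μ := μ) hα (hpos x hx).1
        have h2 := ((hasDerivAt_id x).sub_const n).const_mul (-μ * rr α μ n)
        have h3 := (h1.sub_const (uu α μ n)).sub h2
        rw [mul_one] at h3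
        exact h3.hasDerivWithinAt)
      (fun x hx => by
        have := hr x hx
        have h2 : |x - n| ≤ |t - n| := abs_sub_left_of_mem_uIcc hx
        rw [Real.norm_eq_abs, show -μ * rr α μ x - (-μ * rr α μ n) = -(μ * (rr α μ x - rr α μ n)) by ring,
          abs_neg, abs_mul, abs_of_pos hμ]
        refine mul_le_mul_of_nonneg_left (this.trans ?_) hμ.le
        gcongr)
      left_mem_uIcc right_mem_uIcc
    simp only [sub_self, mul_zero, sub_zero, Real.norm_eq_abs] at hu
    refine hu.trans ?_
    have : μ * (K * |t - n|) * |t - n| = 24 / Real.Gamma α * μ * n ^ (α - 2) * (t - n) ^ 2 := by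
      rw [← sq_abs (t - n), hK]; ring
    rw [this]
    gcongr
    have : 0 ≤ 4 / (α * Real.Gamma α) := by positivity
    linarith
  · have hsq : n ^ 2 ≤ 4 * (t - n) ^ 2 := by nlinarith
    obtain ⟨a1, a2, a3⟩ := uu_bounds hα hα1 hμ hn
    obtain ⟨b1, b2, b3⟩ := uu_bounds hα hα1 hμ ht
    have hta : t ^ α ≤ n ^ α := Real.rpow_le_rpow ht.le (by linarith) hα.le
    have b4 : 1 - uu α μ t ≤ μ * (n ^ α / (α * Real.Gamma α)) := by
      refine b3.trans ?_; gcongr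
    have c1 : |uu α μ t - uu α μ n| ≤ μ * (n ^ α / (α * Real.Gamma α)) := by
      rw [abs_le]; constructor <;> linarith
    have r1 := rr_pos hα hα1 hμ hn
    have r2 := rr_le hα hα1 hμ hn
    have c2 : |(-μ * rr α μ n) * (t - n)| ≤ μ * (pk α n * n) := by
      rw [abs_mul, abs_mul, abs_neg, abs_of_pos hμ, abs_of_pos r1, mul_assoc]
      have : |t - n| ≤ n := by rw [abs_le]; constructor <;> linarith
      have hpp := (pk_pos hα hn).le
      gcongr
    refine (abs_sub _ _).trans ((add_le_add c1 c2).trans ?_)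
    rw [hpk, hna]
    calc μ * (n ^ 2 * n ^ (α - 2) / (α * Real.Gamma α)) + μ * (n * n ^ (α - 2) / Real.Gamma α * n)
        = (1 / Real.Gamma α + 1 / (α * Real.Gamma α)) * μ * n ^ (α - 2) * n ^ 2 := by field_simp; ring
      _ ≤ (1 / Real.Gamma α + 1 / (α * Real.Gamma α)) * μ * n ^ (α - 2) * (4 * (t - n) ^ 2) := by gcongr
      _ = (4 / Real.Gamma α + 4 / (α * Real.Gamma α)) * μ * n ^ (α - 2) * (t - n) ^ 2 := by ring
      _ ≤ _ := by gcongr; norm_num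

noncomputable def gm (m : ℕ) (s : ℝ) : ℝ := Real.exp (-s) * s ^ m / (Nat.factorial m : ℝ)

lemma gm_pos (m : ℕ) {s : ℝ} (hs : 0 < s) : 0 < gm m s := by
  have := Nat.cast_pos (α := ℝ).mpr (Nat.factorial_pos m)
  unfold gm; positivity

lemma gm_cont (m : ℕ) : Continuous (gm m) := by
  unfold gm; fun_prop

lemma gm_mul (m : ℕ) (s : ℝ) : gm m s * s = (m + 1) * gm (m + 1) s := by
  have := Nat.cast_ne_zero (R := ℝ).mpr (Nat.factorial_ne_zero m)
  have h2 : (m + 1 : ℝ) ≠ 0 := by positivity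
  unfold gm
  rw [Nat.factorial_succ]; push_cast; field_simp; ring

lemma gm_integrable (m : ℕ) : IntegrableOn (gm m) (Ioi 0) := by
  have h := (Real.GammaIntegral_convergent (s := m + 1) (by positivity)).div_const (Nat.factorial m : ℝ)
  refine IntegrableOn.congr_fun h (fun s hs => ?_) measurableSet_Ioi
  simp [gm]

lemma gm_integral (m : ℕ) : ∫ s in Ioi 0, gm m s = 1 := by
  have h := Real.Gamma_eq_integral (s := m + 1) (by positivity)
  rw [Real.Gamma_nat_eq_factorial] at h
  simp only [add_sub_cancel_right, Real.rpow_natCast] at h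
  simp only [gm]
  rw [integral_div, ← h, div_self (Nat.cast_ne_zero.mpr (Nat.factorial_ne_zero m))]

lemma gm_mean (m : ℕ) : IntegrableOn (fun s => gm m s * (s - (m + 1))) (Ioi 0) ∧
    ∫ s in Ioi 0, gm m s * (s - (m + 1)) = 0 := by
  have e : (fun s => gm m s * (s - (m + 1))) = fun s => (m + 1) * gm (m + 1) s - (m + 1) * gm m s := by
    ext s; rw [mul_sub, gm_mul]; ring
  rw [e]
  have i1 := (gm_integrable (m + 1)).const_mul (m + 1 : ℝ)
  have i2 := (gm_integrable m).const_mul (m + 1 : ℝ)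
  refine ⟨i1.sub i2, ?_⟩
  rw [integral_sub i1 i2, integral_const_mul, integral_const_mul, gm_integral, gm_integral]; ring

lemma gm_var (m : ℕ) : IntegrableOn (fun s => gm m s * (s - (m + 1)) ^ 2) (Ioi 0) ∧
    ∫ s in Ioi 0, gm m s * (s - (m + 1)) ^ 2 = (m + 1 : ℝ) := by
  have e : (fun s => gm m s * (s - (m + 1)) ^ 2) =
      fun s => (m + 1) * (m + 2) * gm (m + 2) s - (2 * (m + 1) * (m + 1) * gm (m + 1) s - (m + 1) ^ 2 * gm m s) := by
    ext s
    have h1 := gm_mul m s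
    have h2 := gm_mul (m + 1) s
    push_cast at h2
    have : gm m s * (s - (m + 1)) ^ 2 = gm m s * s * s - 2 * (m + 1) * (gm m s * s) + (m + 1) ^ 2 * gm m s := by
      ring
    rw [this, h1, mul_assoc (m + 1 : ℝ), h2]; ring
  rw [e]
  have i0 := (gm_integrable (m + 2)).const_mul ((m + 1 : ℝ) * (m + 2))
  have i1 := (gm_integrable (m + 1)).const_mul (2 * (m + 1 : ℝ) * (m + 1))
  have i2 := (gm_integrable m).const_mul ((m + 1 : ℝ) ^ 2)
  have i3 : IntegrableOn (fun s => 2 * (m + 1) * (m + 1) * gm (m + 1) s - (m + 1) ^ 2 * gm m s) (Ioi 0) := i1.sub i2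
  refine ⟨i0.sub i3, ?_⟩
  rw [integral_sub i0 i3, integral_sub i1 i2, integral_const_mul, integral_const_mul,
    integral_const_mul, gm_integral, gm_integral, gm_integral]; ring

lemma gm_add (m : ℕ) (s t : ℝ) :
    ∑ p ∈ Finset.HasAntidiagonal.antidiagonal m, gm p.1 s * gm p.2 t = gm m (s + t) := by
  unfold gm
  rw [(Commute.all s t).add_pow', Finset.mul_sum, Finset.sum_div]
  refine Finset.sum_congr rfl (fun p hp => ?_)
  have hp : p.1 + p.2 = m := Finset.HasAntidiagonal.mem_antidiagonal.mp hp
  have h1 := Nat.cast_ne_zero (R := ℝ).mpr (Nat.factorial_ne_zero p.1)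
  have h2 := Nat.cast_ne_zero (R := ℝ).mpr (Nat.factorial_ne_zero p.2)
  have h3 := Nat.cast_ne_zero (R := ℝ).mpr (Nat.factorial_ne_zero m)
  have hc : (m.choose p.1 : ℝ) * p.1.factorial * p.2.factorial = m.factorial := by
    have := Nat.choose_mul_factorial_mul_factorial (n := m) (k := p.1) (by omega)
    rw [show m - p.1 = p.2 by omega] at this
    exact_mod_cast this
  rw [neg_add, Real.exp_add, nsmul_eq_mul]
  field_simp
  rw [← hc]; ring

lemma gm_pk {α : ℝ} (hα : 0 < α) (j : ℕ) : IntegrableOn (fun s => gm j s * pk α s) (Ioi 0) ∧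
    ∫ s in Ioi 0, gm j s * pk α s = cqWeight (-α) j := by
  have hg := (Real.Gamma_pos_of_pos hα).ne'
  have e : ∀ s ∈ Ioi (0:ℝ), Real.exp (-s) * s ^ ((j + α : ℝ) - 1) / (Real.Gamma α * j.factorial) = gm j s * pk α s := by
    intro s hs
    have hs : 0 < s := hs
    have : s ^ ((j + α : ℝ) - 1) = s ^ j * s ^ (α - 1) := by
      rw [add_sub_assoc, Real.rpow_add hs, Real.rpow_natCast]
    rw [this, gm, pk]
    have h3 := Nat.cast_ne_zero (R := ℝ).mpr (Nat.factorial_ne_zero j)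
    field_simp
  have h := (Real.GammaIntegral_convergent (s := j + α) (by positivity)).div_const (Real.Gamma α * j.factorial)
  refine ⟨IntegrableOn.congr_fun h e measurableSet_Ioi, ?_⟩
  rw [← setIntegral_congr_fun measurableSet_Ioi e, integral_div, ← Real.Gamma_eq_integral (by positivity)]
  have hG : Real.Gamma (j + α) = Real.Gamma α * ((-1) ^ j * ∏ i ∈ Finset.range j, (-α - i)) := by
    clear e h
    induction j with
    | zero => simp
    | succ j ih =>
      rw [Finset.prod_range_succ, show ((j + 1 : ℕ) : ℝ) + α = (j + α) + 1 by push_cast; ring,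
        Real.Gamma_add_one (by positivity), ih]; ring
  rw [hG, cqWeight, mul_div_mul_left _ _ hg]

noncomputable def VV (α μ : ℝ) (m : ℕ) : ℝ := ∫ s in Ioi 0, gm m s * uu α μ s

lemma uu_cont {α μ : ℝ} (hα : 0 < α) : ContinuousOn (uu α μ) (Ioi 0) :=
  continuousOn_SS hα one_pos (geo_ar μ)

lemma gm_uu {α μ : ℝ} (hα : 0 < α) (hα1 : α < 1) (hμ : 0 < μ) (m : ℕ) :
    IntegrableOn (fun s => gm m s * uu α μ s) (Ioi 0) := by
  refine (gm_integrable m).mono' ?_ ?_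
  · exact ((gm_cont m).continuousOn.mul (uu_cont hα)).aestronglyMeasurable measurableSet_Ioi
  · filter_upwards [ae_restrict_mem measurableSet_Ioi] with s hs
    obtain ⟨h1, h2, _⟩ := uu_bounds hα hα1 hμ hs
    have := gm_pos m hs
    rw [Real.norm_eq_abs, abs_of_nonneg (by positivity)]
    nlinarith

lemma VV_volterra {α μ : ℝ} (hα : 0 < α) (hα1 : α < 1) (hμ : 0 < μ) (m : ℕ) :
    VV α μ m + μ * ∑ p ∈ Finset.HasAntidiagonal.antidiagonal m, VV α μ p.1 * cqWeight (-α) p.2 = 1 := by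
  have key : ∀ p : ℕ × ℕ,
      IntegrableOn (fun x => ∫ t in (0:ℝ)..x, (gm p.1 t * uu α μ t) * (gm p.2 (x - t) * pk α (x - t))) (Ioi 0) ∧
      ∫ x in Ioi 0, ∫ t in (0:ℝ)..x, (gm p.1 t * uu α μ t) * (gm p.2 (x - t) * pk α (x - t)) =
        VV α μ p.1 * cqWeight (-α) p.2 := by
    intro p
    have i1 := gm_uu hα hα1 hμ p.1
    have i2 := (gm_pk hα p.2).1
    constructor
    · have := integrable_posConvolution i1 i2 (ContinuousLinearMap.mul ℝ ℝ)
      unfold posConvolution at this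
      rw [integrable_indicator_iff measurableSet_Ioi] at this
      exact this
    · have := integral_posConvolution i1 i2 (ContinuousLinearMap.mul ℝ ℝ)
      rw [← (gm_pk hα p.2).2]
      exact this
  have h1 : ∑ p ∈ Finset.HasAntidiagonal.antidiagonal m, VV α μ p.1 * cqWeight (-α) p.2 =
      ∫ x in Ioi 0, gm m x * ∫ t in (0:ℝ)..x, uu α μ t * pk α (x - t) := by
    rw [← Finset.sum_congr rfl (fun p _ => (key p).2), ← integral_finsetSum _ (fun p _ => (key p).1)]
    refine setIntegral_congr_fun measurableSet_Ioi (fun x hx => ?_)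
    have hx : 0 < x := hx
    have hi : IntervalIntegrable (fun t => uu α μ t * pk α (x - t)) volume 0 x := by
      have := integrable_conv hα one_pos hα (geo_ar μ) geo_dl hx
      simp only [SS_dl] at this
      exact this
    have e : ∀ p : ℕ × ℕ, (fun t => (gm p.1 t * uu α μ t) * (gm p.2 (x - t) * pk α (x - t))) =
        fun t => (gm p.1 t * gm p.2 (x - t)) * (uu α μ t * pk α (x - t)) := by
      intro p; ext t; ring
    simp only [e]
    rw [← intervalIntegral.integral_finsetSum, ← intervalIntegral.integral_const_mul]
    · congr 1; ext t
      rw [← Finset.sum_mul, gm_add]; congr 2; ring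
    · intro p _
      refine hi.continuousOn_mul ?_
      exact ((gm_cont p.1).mul ((gm_cont p.2).comp (continuous_const.sub continuous_id))).continuousOn
  have hInt : IntegrableOn (fun x => gm m x * ∫ t in (0:ℝ)..x, uu α μ t * pk α (x - t)) (Ioi 0) := by
    have := ((gm_integrable m).sub (gm_uu hα hα1 hμ m)).div_const μ
    refine IntegrableOn.congr_fun this (fun x hx => ?_) measurableSet_Ioi
    have := uu_volterra (μ := μ) hα hx
    simp only [Pi.sub_apply]
    rw [div_eq_iff hμ.ne']
    linear_combination (-gm m x) * this
  rw [h1, ← integral_const_mul, VV, ← integral_add (gm_uu hα hα1 hμ m) (hInt.const_mul μ), ← gm_integral m]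
  refine setIntegral_congr_fun measurableSet_Ioi (fun x hx => ?_)
  have := uu_volterra (μ := μ) hα hx
  linear_combination (gm m x) * this

lemma cq_choose (α : ℝ) (j : ℕ) : cqWeight α j = (-1) ^ j * Ring.choose α j := by
  rw [cqWeight, Ring.choose_eq_smul, ← Polynomial.aeval_eq_smeval, Polynomial.aeval_def,
    Polynomial.eval₂_eq_eval_map, descPochhammer_map, ← descPochhammer_eval_eq_prod_range]
  rw [smul_eq_mul, mul_div_assoc, div_eq_inv_mul]

lemma cq_inv (α : ℝ) : (PowerSeries.mk (cqWeight α)) * (PowerSeries.mk (cqWeight (-α))) = 1 := by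
  ext n
  rw [PowerSeries.coeff_mul, PowerSeries.coeff_one]
  simp only [PowerSeries.coeff_mk, cq_choose]
  have h := Ring.add_choose_eq (r := α) (s := -α) n (Commute.all _ _)
  rw [add_neg_cancel] at h
  have : ∑ p ∈ Finset.HasAntidiagonal.antidiagonal n,
      (-1) ^ p.1 * Ring.choose α p.1 * ((-1) ^ p.2 * Ring.choose (-α) p.2) = (-1) ^ n * Ring.choose (0:ℝ) n := by
    rw [h, Finset.mul_sum]
    refine Finset.sum_congr rfl (fun p hp => ?_)
    rw [← Finset.HasAntidiagonal.mem_antidiagonal.mp hp, pow_add]; ring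
  rw [this]
  split_ifs with hn
  · subst hn; simp
  · rw [Ring.choose_zero_pos _ (Nat.pos_of_ne_zero hn)]; simp

lemma scheme_eq {α μ : ℝ} (hα : 0 < α) (hα1 : α < 1) (hμ : 0 < μ) (F : ℕ → ℝ) (h0 : F 0 = 1)
    (hF : ∀ n : ℕ, 1 ≤ n → ∑ j ∈ Finset.range (n + 1), cqWeight α j * (F (n - j) - 1) + μ * F n = 0) (m : ℕ) :
    F (m + 1) = VV α μ m := by
  set B := PowerSeries.mk (cqWeight α)
  set W := PowerSeries.mk (cqWeight (-α))
  set O : PowerSeries ℝ := PowerSeries.mk (fun _ => 1)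
  set P : PowerSeries ℝ := PowerSeries.mk (fun k => F (k + 1))
  set Q : PowerSeries ℝ := PowerSeries.mk (fun k => VV α μ k)
  have hBW : B * W = 1 := cq_inv α
  have hQ : Q + PowerSeries.C μ * (Q * W) = O := by
    ext k
    rw [map_add, PowerSeries.coeff_C_mul, PowerSeries.coeff_mul]
    simp only [Q, W, O, PowerSeries.coeff_mk]
    exact VV_volterra hα hα1 hμ k
  have hP : B * (P - O) + PowerSeries.C μ * P = 0 := by
    ext k
    rw [map_add, PowerSeries.coeff_C_mul, PowerSeries.coeff_mul]
    simp only [B, P, O, PowerSeries.coeff_mk, map_sub, map_zero]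
    have := hF (k + 1) (by omega)
    rw [Finset.sum_range_succ, Nat.sub_self, h0, sub_self, mul_zero, add_zero] at this
    rw [Finset.Nat.sum_antidiagonal_eq_sum_range_succ (fun i j => cqWeight α i * (F (j + 1) - 1)), ← this]
    congr 1
    refine Finset.sum_congr rfl (fun j hj => ?_)
    have := Finset.mem_range.mp hj
    rw [show k + 1 - j = k - j + 1 by omega]
  have hz : (1 + PowerSeries.C μ * W) * (P - Q) = 0 := by
    linear_combination W * hP - hQ + (O - P) * hBW
  have hne : (1 + PowerSeries.C μ * W) ≠ 0 := by
    intro h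
    have := congrArg (PowerSeries.coeff 0) h
    rw [map_add, PowerSeries.coeff_C_mul] at this
    simp [W, cqWeight] at this
    linarith
  have := (mul_eq_zero.mp hz).resolve_left hne
  have := congrArg (PowerSeries.coeff m) this
  simp only [map_sub, P, Q, PowerSeries.coeff_mk, map_zero] at this
  linarith

lemma VV_err {α μ : ℝ} (hα : 0 < α) (hα1 : α < 1) (hμ : 0 < μ) (m : ℕ) :
    |uu α μ (m + 1) - VV α μ m| ≤
      (24 / Real.Gamma α + 4 / (α * Real.Gamma α)) * μ * (m + 1 : ℝ) ^ (α - 1) := by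
  have hn : (0:ℝ) < m + 1 := by positivity
  set n : ℝ := m + 1 with hnd
  set C := (24 / Real.Gamma α + 4 / (α * Real.Gamma α)) * μ * n ^ (α - 2)
  obtain ⟨i1, e1⟩ := gm_mean m
  obtain ⟨i2, e2⟩ := gm_var m
  rw [← hnd] at i1 e1 i2 e2
  have iu := gm_uu hα hα1 hμ m
  have ig := gm_integrable m
  have hE : VV α μ m - uu α μ n =
      ∫ s in Ioi 0, gm m s * (uu α μ s - uu α μ n - (-μ * rr α μ n) * (s - n)) := by
    have : (fun s => gm m s * (uu α μ s - uu α μ n - (-μ * rr α μ n) * (s - n))) =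
        fun s => gm m s * uu α μ s - (uu α μ n * gm m s + (-μ * rr α μ n) * (gm m s * (s - n))) := by
      ext s; ring
    have i3 : IntegrableOn (fun s => uu α μ n * gm m s + (-μ * rr α μ n) * (gm m s * (s - n))) (Ioi 0) :=
      (ig.const_mul _).add (i1.const_mul _)
    rw [this, integral_sub iu i3,
      integral_add (ig.const_mul _) (i1.const_mul _), integral_const_mul, integral_const_mul, e1, gm_integral, VV]
    ring
  have hC : C * n = (24 / Real.Gamma α + 4 / (α * Real.Gamma α)) * μ * n ^ (α - 1) := by
    rw [show α - 1 = α - 2 + 1 by ring, Real.rpow_add_one hn.ne']; ring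
  have e3 : C * n = ∫ s in Ioi 0, C * (gm m s * (s - n) ^ 2) := by
    rw [integral_const_mul, e2]
  rw [abs_sub_comm, hE, ← hC, e3, ← Real.norm_eq_abs]
  refine norm_integral_le_of_norm_le (i2.const_mul C) ?_
  filter_upwards [ae_restrict_mem measurableSet_Ioi] with s hs
  have hs : 0 < s := hs
  have hg := gm_pos m hs
  rw [Real.norm_eq_abs, abs_mul, abs_of_pos hg]
  have := mul_le_mul_of_nonneg_left (taylor hα hα1 hμ hn hs) hg.le
  refine this.trans (le_of_eq ?_)
  simp only [C]; ring

lemma ml_uu {α μ : ℝ} {t : ℝ} (ht : 0 < t) : mittagLeffler α (-(μ * t ^ α)) = uu α μ t := by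
  rw [mittagLeffler, uu, SS]
  congr 1; ext k
  rw [pk_fac ht, ar, sub_self, Real.rpow_zero, one_mul, ← neg_mul, mul_pow]; ring

end

/-- Weighted error bound for the backward Euler CQ approximation `F_τ^n(λ)`
(characterized by the discrete scheme `∂̄_τ^α(F^n − 1) + λ F^n = 0`, `F^0 = 1`):
`λ⁻¹ |E_{α,1}(-λ t_n^α) − F_τ^n(λ)| ≤ c τ t_n^{α-1}`. -/
theorem cq_ml_weighted_error_bound (α : ℝ) (hα : α ∈ Set.Ioo (0 : ℝ) 1) :
    ∃ c : ℝ, 0 < c ∧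
      ∀ τ lam : ℝ, 0 < τ → 0 < lam → ∀ F : ℕ → ℝ, F 0 = 1 →
        (∀ n : ℕ, 1 ≤ n →
          τ ^ (-α) * ∑ j ∈ Finset.range (n + 1), cqWeight α j * (F (n - j) - 1)
            + lam * F n = 0) →
        ∀ n : ℕ, 1 ≤ n →
          lam⁻¹ * |mittagLeffler α (-(lam * ((n : ℝ) * τ) ^ α)) - F n|
            ≤ c * τ * ((n : ℝ) * τ) ^ (α - 1) := by
  obtain ⟨h0, h1⟩ := hα
  have hg := Real.Gamma_pos_of_pos h0
  refine ⟨24 / Real.Gamma α + 4 / (α * Real.Gamma α), by positivity, ?_⟩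
  intro τ lam hτ hl F hF0 hF n hn
  obtain ⟨m, rfl⟩ : ∃ m, n = m + 1 := ⟨n - 1, by omega⟩
  have hta : 0 < τ ^ α := Real.rpow_pos_of_pos hτ α
  have hμ : 0 < lam * τ ^ α := by positivity
  have hFm : F (m + 1) = VV α (lam * τ ^ α) m := by
    refine scheme_eq h0 h1 hμ F hF0 (fun k hk => ?_) m
    have h := hF k hk
    rw [Real.rpow_neg hτ.le] at h
    have h2 : τ ^ α * (τ ^ α)⁻¹ = 1 := mul_inv_cancel₀ hta.ne'
    linear_combination τ ^ α * h - (∑ j ∈ Finset.range (k + 1), cqWeight α j * (F (k - j) - 1)) * h2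
  have hp : (0:ℝ) < m + 1 := by positivity
  have hE := VV_err h0 h1 hμ m
  push_cast
  rw [Real.mul_rpow hp.le hτ.le, Real.mul_rpow hp.le hτ.le,
    show lam * ((m + 1 : ℝ) ^ α * τ ^ α) = lam * τ ^ α * (m + 1 : ℝ) ^ α by ring, ml_uu hp, hFm,
    inv_mul_le_iff₀ hl]
  refine hE.trans (le_of_eq ?_)
  have : τ ^ α = τ * τ ^ (α - 1) := by
    rw [mul_comm, ← Real.rpow_add_one hτ.ne']; congr 1; ring
  rw [this]; ring
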